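/- Let P ∈ ℤ[x] be a polynomial that is either an irreducible quadratic or a product of at least two pairwise non-proportional linear factors a_i x + b_i over ℤ (i.e. a_i b_j − a_j b_i ≠ 0 for i ≠ j), assume P is admissible, and assume P(n) ≥ 2 for all positive integers n. Then ∑_p (#{n ≤ N : the largest prime factor of P(n) equals p})² = o(N²) as N → ∞, where the sum is over all primes p; that is, for every ε > 0 there exists N₀ such that for all N ≥ N₀ the sum is at most ε·N². -/

import Mathlib

/-- `p` is the largest prime factor of the integer `m`. -/
def IsMaxPrimeFac (p : ℕ) (m : ℤ) : Prop :=
  p.Prime ∧ (p : ℤ) ∣ m ∧ ∀ q : ℕ, q.Prime → (q : ℤ) ∣ m → q ≤ p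

open Polynomial in
lemma aux_deg (P : Polynomial ℤ)
    (hP : (∃ k : ℕ, 2 ≤ k ∧ ∃ a b : Fin k → ℤ, (∀ i, a i ≠ 0) ∧
            P = ∏ i, (Polynomial.C (a i) * Polynomial.X + Polynomial.C (b i)) ∧
            ∀ i j, i ≠ j → a i * b j - a j * b i ≠ 0) ∨
          (P.natDegree = 2 ∧ Irreducible P)) : 0 < P.natDegree := by
  rcases hP with ⟨k, hk, a, b, ha, rfl, -⟩ | ⟨h, -⟩
  · rw [Polynomial.natDegree_prod]
    · simp only [Polynomial.natDegree_linear (ha _)]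
      simp; omega
    · intro i _ h
      have := Polynomial.natDegree_linear (b := b i) (ha i)
      rw [h] at this
      simp at this
  · omega

lemma aux_large (P : Polynomial ℤ) (hd : 0 < P.natDegree) (p : ℕ) (hp : p.Prime)
    (hlc : P.leadingCoeff.natAbs < p) (N : ℕ) :
    ((Finset.Icc 1 N).filter (fun n : ℕ => (p : ℤ) ∣ P.eval (n : ℤ))).card
      ≤ P.natDegree * (N / p + 1) := by
  classical
  have : Fact p.Prime := ⟨hp⟩
  set Q := P.map (Int.castRingHom (ZMod p)) with hQ
  have hP0 : P ≠ 0 := by rintro rfl; simp at hd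
  have hQ0 : Q ≠ 0 := by
    intro h
    have h1 : Q.coeff P.natDegree = 0 := by rw [h]; simp
    rw [hQ, Polynomial.coeff_map] at h1
    simp only [eq_intCast] at h1
    rw [ZMod.intCast_zmod_eq_zero_iff_dvd] at h1
    have h2 := Int.natAbs_dvd_natAbs.mpr h1
    simp only [Int.natAbs_natCast] at h2
    have h3 : 0 < P.leadingCoeff.natAbs :=
      Int.natAbs_pos.mpr (Polynomial.leadingCoeff_ne_zero.mpr hP0)
    have := Nat.le_of_dvd h3 h2
    omega
  have hcard : Q.roots.toFinset.card ≤ P.natDegree :=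
    (Multiset.toFinset_card_le _).trans
      ((Polynomial.card_roots' Q).trans Polynomial.natDegree_map_le)
  calc _ ≤ (Q.roots.toFinset ×ˢ Finset.range (N / p + 1)).card := by
        apply Finset.card_le_card_of_injOn (fun n : ℕ => ((n : ZMod p), n / p))
        · intro n hn
          simp only [Finset.coe_filter, Finset.mem_Icc, Set.mem_ofPred_eq] at hn
          simp only [Finset.coe_product, Set.mem_prod, Finset.mem_coe, Finset.mem_range,
            Multiset.mem_toFinset, Polynomial.mem_roots hQ0, Polynomial.IsRoot.def]
          refine ⟨?_, Nat.lt_succ_of_le (Nat.div_le_div_right hn.1.2)⟩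
          have := (ZMod.intCast_zmod_eq_zero_iff_dvd _ p).mpr hn.2
          rw [hQ, Polynomial.eval_map]
          rw [Polynomial.eval₂_at_natCast]
          simpa using this
        · intro n _ m _ h
          simp only [Prod.mk.injEq] at h
          have h1 := (ZMod.natCast_eq_natCast_iff' _ _ _).mp h.1
          rw [← Nat.div_add_mod n p, ← Nat.div_add_mod m p, h1, h.2]
    _ ≤ _ := by
        rw [Finset.card_product, Finset.card_range]
        exact Nat.mul_le_mul_right _ hcard

lemma aux_small (P : Polynomial ℤ) (hd : 0 < P.natDegree)
    (hpos : ∀ n : ℕ, 0 < n → 2 ≤ P.eval (n : ℤ)) (K X N : ℕ)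
    (hX : ∀ n ∈ Finset.Icc 1 N, P.eval (n : ℤ) ≤ X) (S : Finset ℕ)
    (hS : S ⊆ Finset.Icc 1 N)
    (hsm : ∀ n ∈ S, ∀ q : ℕ, q.Prime → (q : ℤ) ∣ P.eval (n : ℤ) → q < K) :
    S.card ≤ P.natDegree * (Nat.log 2 X + 1) ^ K := by
  classical
  have key := Finset.card_le_mul_card_image_of_maps_to (s := S)
    (t := Fintype.piFinset (fun _ : Fin K => Finset.range (Nat.log 2 X + 1)))
    (f := fun n : ℕ => fun i : Fin K => (P.eval (n : ℤ)).toNat.factorization i)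
    (by
      intro n hn
      rw [Fintype.mem_piFinset]
      intro i
      have h1 := hX n (hS hn)
      have h2 := hpos n (Finset.mem_Icc.mp (hS hn)).1
      rw [Finset.mem_range, Nat.lt_succ_iff]
      set m := (P.eval (n : ℤ)).toNat with hm
      have hm0 : m ≠ 0 := by omega
      have hmX : m ≤ X := by omega
      by_cases hi : (i : ℕ).Prime
      · apply Nat.le_log_of_pow_le (by norm_num)
        calc 2 ^ m.factorization i ≤ (i : ℕ) ^ m.factorization i :=
              Nat.pow_le_pow_left hi.two_le _
          _ ≤ m := Nat.ordProj_le _ hm0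
          _ ≤ X := hmX
      · simp [Nat.factorization_eq_zero_of_not_prime _ hi])
    P.natDegree
    (by
      intro v hv
      rcases Finset.eq_empty_or_nonempty
        (S.filter fun n : ℕ => (fun i : Fin K => (P.eval (n : ℤ)).toNat.factorization i) = v) with
        he | ⟨n₀, hn₀⟩
      · rw [he]; simp
      · rw [Finset.mem_filter] at hn₀
        set c := P.eval (n₀ : ℤ) with hc
        have hQ0 : P - Polynomial.C c ≠ 0 := by
          intro h
          rw [sub_eq_zero] at h
          rw [h] at hd
          simp at hd
        have hcard : (P - Polynomial.C c).roots.toFinset.card ≤ P.natDegree := by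
          refine (Multiset.toFinset_card_le _).trans ((Polynomial.card_roots' _).trans ?_)
          rw [Polynomial.natDegree_sub_C]
        refine le_trans ?_ hcard
        apply Finset.card_le_card_of_injOn (fun n : ℕ => (n : ℤ))
        · intro n hn
          simp only [Finset.coe_filter, Set.mem_ofPred_eq] at hn
          rw [Finset.mem_coe, Multiset.mem_toFinset, Polynomial.mem_roots hQ0,
            Polynomial.IsRoot.def, Polynomial.eval_sub, Polynomial.eval_C, sub_eq_zero]
          have hn1 := hpos n (Finset.mem_Icc.mp (hS hn.1)).1
          have hn2 := hpos n₀ (Finset.mem_Icc.mp (hS hn₀.1)).1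
          have hE : (P.eval (n : ℤ)).toNat = c.toNat := by
            apply Nat.eq_of_factorization_eq (by omega) (by omega)
            intro q
            by_cases hq : q < K
            · have := congrFun (hn.2.trans hn₀.2.symm) ⟨q, hq⟩
              simpa using this
            · have hz : ∀ n ∈ S, (P.eval (n : ℤ)).toNat.factorization q = 0 := by
                intro n hn
                by_cases hqp : q.Prime
                · apply Nat.factorization_eq_zero_of_not_dvd
                  intro hdv
                  apply hq
                  apply hsm n hn q hqp
                  have h2 := hpos n (Finset.mem_Icc.mp (hS hn)).1
                  have := Int.natCast_dvd_natCast.mpr hdv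
                  rwa [Int.toNat_of_nonneg (by omega)] at this
                · exact Nat.factorization_eq_zero_of_not_prime _ hqp
              rw [hz n hn.1, hc, hz n₀ hn₀.1]
          beta_reduce
          omega
        · intro a _ b _ h
          exact Int.ofNat_injective h)
  simpa using key

lemma aux_bound (P : Polynomial ℤ) : ∃ C : ℕ, 0 < C ∧ ∀ N : ℕ, ∀ n ∈ Finset.Icc 1 N,
    P.eval (n : ℤ) ≤ ((C * N ^ P.natDegree : ℕ) : ℤ) := by
  refine ⟨(∑ i ∈ Finset.range (P.natDegree + 1), (P.coeff i).natAbs) + 1, by omega, ?_⟩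
  intro N n hn
  rw [Finset.mem_Icc] at hn
  rw [Polynomial.eval_eq_sum_range]
  push_cast
  rw [add_mul, Finset.sum_mul]
  have : ∑ i ∈ Finset.range (P.natDegree + 1), P.coeff i * (n : ℤ) ^ i ≤
      ∑ i ∈ Finset.range (P.natDegree + 1), |P.coeff i| * (N : ℤ) ^ P.natDegree := by
    apply Finset.sum_le_sum
    intro i hi
    rw [Finset.mem_range] at hi
    have h1 : (n : ℤ) ^ i ≤ (N : ℤ) ^ P.natDegree := by
      have : n ^ i ≤ N ^ P.natDegree :=
        (Nat.pow_le_pow_left hn.2 i).trans (Nat.pow_le_pow_right (by omega) (by omega))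
      exact_mod_cast this
    exact (mul_le_mul_of_nonneg_right (le_abs_self _) (by positivity)).trans
      (mul_le_mul_of_nonneg_left h1 (abs_nonneg _))
  have h2 : (0 : ℤ) ≤ 1 * (N : ℤ) ^ P.natDegree := by positivity
  linarith

lemma aux_asymp (d C K : ℕ) (hC : 0 < C) (ε : ℝ) (hε : 0 < ε) :
    ∀ᶠ N : ℕ in Filter.atTop,
      ((d * (Nat.log 2 (C * N ^ d) + 1) ^ K : ℕ) : ℝ) ≤ ε * N := by
  set B : ℝ := 2 * Real.log C + 2 * d + 1 with hB
  have hlC : 0 ≤ Real.log C := Real.log_natCast_nonneg C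
  have hBpos : 0 < B := by positivity
  have h1 := (Real.isLittleO_pow_log_id_atTop (n := K)).comp_tendsto
    (tendsto_natCast_atTop_atTop (R := ℝ))
  have h2 := h1.bound (c := ε / (d * B ^ K + 1)) (by positivity)
  filter_upwards [h2, Filter.eventually_ge_atTop 3] with N hN hN3
  simp only [Function.comp, id, Real.norm_eq_abs] at hN
  have hN3' : (3 : ℝ) ≤ N := by exact_mod_cast hN3
  have hlog : 1 ≤ Real.log N := by
    rw [Real.le_log_iff_exp_le (by linarith)]
    linarith [Real.exp_one_lt_d9]
  rw [abs_of_nonneg (by positivity), abs_of_nonneg (by positivity)] at hN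
  have h3 : ((Nat.log 2 (C * N ^ d) : ℕ) : ℝ) + 1 ≤ B * Real.log N := by
    have h4 := Real.natLog_le_logb (C * N ^ d) 2
    rw [Real.logb] at h4
    have hNe : (N : ℝ) ≠ 0 := by positivity
    have hCe : (C : ℝ) ≠ 0 := by positivity
    push_cast at h4
    rw [Real.log_mul hCe (by positivity), Real.log_pow] at h4
    have h5 : (Real.log C + d * Real.log N) / Real.log 2 ≤ 2 * (Real.log C + d * Real.log N) := by
      rw [div_le_iff₀ (by positivity)]
      have : 0 ≤ Real.log C + d * Real.log N := by positivity
      nlinarith [Real.log_two_gt_d9]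
    rw [hB]
    nlinarith
  push_cast
  calc (d : ℝ) * ((Nat.log 2 (C * N ^ d) : ℕ) + 1 : ℝ) ^ K ≤ d * (B * Real.log N) ^ K := by
        gcongr
    _ = (d * B ^ K) * Real.log N ^ K := by ring
    _ ≤ (d * B ^ K + 1) * (ε / (d * B ^ K + 1) * N) := by
        apply mul_le_mul (by linarith) hN (by positivity) (by positivity)
    _ = ε * N := by field_simp

theorem sum_sq_count_max_prime_factor_o
    (P : Polynomial ℤ)
    (hP : (∃ k : ℕ, 2 ≤ k ∧ ∃ a b : Fin k → ℤ, (∀ i, a i ≠ 0) ∧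
            P = ∏ i, (Polynomial.C (a i) * Polynomial.X + Polynomial.C (b i)) ∧
            ∀ i j, i ≠ j → a i * b j - a j * b i ≠ 0) ∨
          (P.natDegree = 2 ∧ Irreducible P))
    (hadm : ¬ ∃ p : ℕ, p.Prime ∧ ∀ n : ℕ, 0 < n → (p : ℤ)^2 ∣ P.eval (n : ℤ))
    (hpos : ∀ n : ℕ, 0 < n → 2 ≤ P.eval (n : ℤ)) :
    ∀ ε : ℝ, 0 < ε → ∃ N₀ : ℕ, ∀ N : ℕ, N₀ ≤ N →
      ∑' p : {p : ℕ // p.Prime},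
        (({n : ℕ | 1 ≤ n ∧ n ≤ N ∧ IsMaxPrimeFac (p : ℕ) (P.eval (n : ℤ))}.ncard : ℝ))^2 ≤
        ε * (N : ℝ)^2 := by
  classical
  intro ε hε
  have hd := aux_deg P hP
  obtain ⟨C, hC, hCb⟩ := aux_bound P
  set d := P.natDegree with hdd
  obtain ⟨K₁, hK₁⟩ := exists_nat_ge (2 * d / ε)
  set K := K₁ + P.leadingCoeff.natAbs + 1 with hK
  obtain ⟨N₁, hN₁⟩ := Filter.eventually_atTop.mp (aux_asymp d C K hC ε hε)
  refine ⟨max N₁ K, fun N hN => ?_⟩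
  have hNN₁ : N₁ ≤ N := (le_max_left _ _).trans hN
  have hNK : K ≤ N := (le_max_right _ _).trans hN
  set A : ℕ → Finset ℕ := fun p =>
    (Finset.Icc 1 N).filter (fun n : ℕ => IsMaxPrimeFac p (P.eval (n : ℤ))) with hA
  have hset : ∀ p : ℕ, {n : ℕ | 1 ≤ n ∧ n ≤ N ∧ IsMaxPrimeFac p (P.eval (n : ℤ))}.ncard
      = (A p).card := by
    intro p
    rw [← Set.ncard_coe_finset]
    congr 1
    ext n
    simp [hA, and_assoc]
  have hmax : ∀ p : ℕ, p.Prime → ((A p).card : ℝ) ≤ ε * N := by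
    intro p hp
    by_cases hpK : p < K
    · refine le_trans ?_ (hN₁ N hNN₁)
      exact_mod_cast aux_small P hd hpos K (C * N ^ d) N (hCb N) (A p)
        (Finset.filter_subset _ _) (by
          intro n hn q hq hqd
          exact ((Finset.mem_filter.mp hn).2.2.2 q hq hqd).trans_lt hpK)
    · have h1 : (A p).card ≤ d * (N / p + 1) := by
        refine le_trans (Finset.card_le_card ?_) (aux_large P hd p hp (by omega) N)
        intro n hn
        rw [Finset.mem_filter] at hn ⊢
        exact ⟨hn.1, hn.2.2.1⟩
      have h2 : N / p ≤ N / K := Nat.div_le_div_left (by omega) (by omega)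
      have h3 : ((N / K : ℕ) : ℝ) ≤ N / K := Nat.cast_div_le
      have hKpos : (0 : ℝ) < K := by rw [hK]; positivity
      have h4 : (1 : ℝ) ≤ N / K := by
        rw [le_div_iff₀ hKpos, one_mul]; exact_mod_cast hNK
      have h5 : 2 * d / ε ≤ K := hK₁.trans (by exact_mod_cast (by omega : K₁ ≤ K))
      rw [div_le_iff₀ hε] at h5
      calc ((A p).card : ℝ) ≤ ((d * (N / K + 1) : ℕ) : ℝ) := by
            exact_mod_cast h1.trans (Nat.mul_le_mul_left _ (by omega))
        _ = d * (((N / K : ℕ) : ℝ) + 1) := by push_cast; ring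
        _ ≤ d * (N / K + N / K) := by gcongr
        _ = (2 * d) * (N / K) := by ring
        _ ≤ (K * ε) * (N / K) := by gcongr
        _ = ε * N := by field_simp
  simp only [hset]
  apply Real.tsum_le_of_sum_le
  · intro p
    positivity
  · intro s
    have hdisj : ∑ p ∈ s, (A p).card ≤ N := by
      rw [← Finset.card_biUnion]
      · refine (Finset.card_le_card (t := Finset.Icc 1 N) ?_).trans (by simp)
        intro n hn
        rw [Finset.mem_biUnion] at hn
        obtain ⟨p, -, hn⟩ := hn
        exact (Finset.mem_filter.mp hn).1
      · intro p _ q _ hpq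
        rw [Function.onFun, Finset.disjoint_left]
        intro n hn hm
        have h1 := (Finset.mem_filter.mp hn).2
        have h2 := (Finset.mem_filter.mp hm).2
        exact hpq (Subtype.ext (le_antisymm (h2.2.2 p h1.1 h1.2.1) (h1.2.2 q h2.1 h2.2.1)))
    calc ∑ p ∈ s, ((A p).card : ℝ) ^ 2 ≤ ∑ p ∈ s, (ε * N) * ((A p).card : ℝ) := by
          apply Finset.sum_le_sum
          intro p _
          rw [sq]
          exact mul_le_mul_of_nonneg_right (hmax p p.2) (by positivity)
      _ = (ε * N) * ((∑ p ∈ s, (A p).card : ℕ) : ℝ) := by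
          rw [← Finset.mul_sum]; push_cast; rfl
      _ ≤ (ε * N) * N := by gcongr
      _ = ε * (N : ℝ) ^ 2 := by ring
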